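/- Zero-energy ground states of the torus square-lattice model exist at every rational filling between 1/5 and 1/4: for every rational number ρ with 1/5 ≤ ρ ≤ 1/4 there exist linearly independent u, v ∈ ℤ² (with every nonzero vector of Λ = ℤu + ℤv of Euclidean length at least 3) and a nonzero state ψ ∈ ker H of the hard-core fermion model on G_{u,v} which is an eigenvector of the number operator F (F|I⟩ = |I|·|I⟩) with eigenvalue F satisfying F / N = ρ, where N = |u₁v₂ − u₂v₁| is the number of vertices of G_{u,v}. -/

import Mathlib

/-! ### The supersymmetric hard-core fermion model on a graph

For a finite simple graph `G` with totally ordered vertex set, the Hilbert space has an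
orthonormal basis `{|I⟩ : I an independent set of G}`, the supercharge acts by
`Q|I⟩ = Σ_v ε(v,I) |I ∪ {v}⟩` (sum over `v ∉ I` with `I ∪ {v}` independent,
`ε(v,I) = (−1)^{#{w ∈ I : w < v}}`), and the Hamiltonian is `H = Q Q† + Q† Q`. -/

open scoped BigOperators

/-- A finite set of vertices is independent if it contains no edge of `G`. -/
def Indep {V : Type*} (G : SimpleGraph V) (I : Finset V) : Prop :=
  ∀ ⦃a⦄, a ∈ I → ∀ ⦃b⦄, b ∈ I → ¬ G.Adj a b

lemma Indep.mono {V : Type*} {G : SimpleGraph V} {I J : Finset V}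
    (hI : Indep G I) (hJI : J ⊆ I) : Indep G J :=
  fun _ ha _ hb => hI (hJI ha) (hJI hb)

/-- The independent sets of `G`, indexing the orthonormal basis of the Hilbert space. -/
def IndepSet {V : Type*} (G : SimpleGraph V) : Type _ := {I : Finset V // Indep G I}

noncomputable instance {V : Type*} [Fintype V] [LinearOrder V] (G : SimpleGraph V) :
    Fintype (IndepSet G) := by
  classical exact Subtype.fintype _

instance {V : Type*} [LinearOrder V] (G : SimpleGraph V) : DecidableEq (IndepSet G) := by
  unfold IndepSet; infer_instance

/-- The Hilbert space `ℋ_G` of the hard-core fermion model: one orthonormal basis state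
`|I⟩` for every independent set `I` of `G`. -/
noncomputable abbrev FockSpace {V : Type*} [Fintype V] [LinearOrder V] (G : SimpleGraph V) :=
  EuclideanSpace ℂ (IndepSet G)

/-- The fermionic sign `ε(v, I) = (−1)^{#{w ∈ I : w < v}}`. -/
def fsign {V : Type*} [LinearOrder V] (I : Finset V) (v : V) : ℂ :=
  (-1) ^ (I.filter (· < v)).card

/-- The supercharge `Q`, with `Q|I⟩ = Σ_v ε(v,I) |I ∪ {v}⟩` over vertices `v ∉ I` such that
`I ∪ {v}` is independent; equivalently `(Qψ)(J) = Σ_{v ∈ J} ε(v, J∖{v}) ψ(J∖{v})`. -/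
noncomputable def supercharge {V : Type*} [Fintype V] [LinearOrder V] (G : SimpleGraph V) :
    FockSpace G →ₗ[ℂ] FockSpace G where
  toFun ψ := WithLp.toLp 2 fun J : IndepSet G => ∑ v ∈ J.1, fsign (J.1.erase v) v *
      ψ ⟨J.1.erase v, J.2.mono (Finset.erase_subset v J.1)⟩
  map_add' ψ φ := by
    refine PiLp.ext fun J => ?_
    exact (Finset.sum_congr rfl fun v _ => mul_add (fsign (J.1.erase v) v)
      (ψ ⟨J.1.erase v, J.2.mono (Finset.erase_subset v J.1)⟩)
      (φ ⟨J.1.erase v, J.2.mono (Finset.erase_subset v J.1)⟩)).trans Finset.sum_add_distrib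
  map_smul' c ψ := by
    refine PiLp.ext fun J => ?_
    exact (Finset.sum_congr rfl fun v _ => mul_left_comm (fsign (J.1.erase v) v) c
      (ψ ⟨J.1.erase v, J.2.mono (Finset.erase_subset v J.1)⟩)).trans (Finset.mul_sum _ _ _).symm

/-- The Hamiltonian `H = Q Q† + Q† Q` of the supersymmetric hard-core fermion model. -/
noncomputable def hamiltonian {V : Type*} [Fintype V] [LinearOrder V] (G : SimpleGraph V) :
    FockSpace G →ₗ[ℂ] FockSpace G :=
  supercharge G ∘ₗ LinearMap.adjoint (supercharge G)
    + LinearMap.adjoint (supercharge G) ∘ₗ supercharge G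

/-- The fermion-number operator `F`, with `F|I⟩ = |I| · |I⟩`. -/
noncomputable def numberOp {V : Type*} [Fintype V] [LinearOrder V] (G : SimpleGraph V) :
    FockSpace G →ₗ[ℂ] FockSpace G where
  toFun ψ := WithLp.toLp 2 fun I : IndepSet G => (I.1.card : ℂ) * ψ I
  map_add' ψ φ := by refine PiLp.ext fun I => ?_; simp [mul_add]
  map_smul' c ψ := by refine PiLp.ext fun I => ?_; simp [mul_left_comm]

/-- The bosonic subspace: the span of the basis states `|I⟩` with `|I|` even. -/
noncomputable def bosonic {V : Type*} [Fintype V] [LinearOrder V] (G : SimpleGraph V) :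
    Submodule ℂ (FockSpace G) :=
  Submodule.span ℂ
    {e : FockSpace G | ∃ I : IndepSet G, Even I.1.card ∧ e = EuclideanSpace.single I 1}

/-- The fermionic subspace: the span of the basis states `|I⟩` with `|I|` odd. -/
noncomputable def fermionic {V : Type*} [Fintype V] [LinearOrder V] (G : SimpleGraph V) :
    Submodule ℂ (FockSpace G) :=
  Submodule.span ℂ
    {e : FockSpace G | ∃ I : IndepSet G, Odd I.1.card ∧ e = EuclideanSpace.single I 1}

/-! ### The torus square lattice and Jonsson's rhombus tilings -/

/-- The lattice `Λ = ℤu + ℤv ⊆ ℤ²`. -/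
def lat (u v : ℤ × ℤ) : AddSubgroup (ℤ × ℤ) := AddSubgroup.closure {u, v}

/-- The torus square-lattice graph `G_{u,v}` on `ℤ²/Λ`: two distinct classes are adjacent
whenever they have representatives differing by `(1,0)` or `(0,1)`. -/
def torusGraph (u v : ℤ × ℤ) : SimpleGraph ((ℤ × ℤ) ⧸ lat u v) where
  Adj a b := a ≠ b ∧
    (a - b = ((1, 0) : ℤ × ℤ) ∨ b - a = ((1, 0) : ℤ × ℤ) ∨
     a - b = ((0, 1) : ℤ × ℤ) ∨ b - a = ((0, 1) : ℤ × ℤ))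
  symm := by
    constructor
    rintro a b ⟨hne, h⟩
    exact ⟨hne.symm, by tauto⟩
  loopless := ⟨fun a h => h.1 rfl⟩

/-- A rhombus placed in the plane: a corner in `ℤ²` together with one of the four Jonsson
rhombus kinds. -/
structure PlacedRhombus where
  corner : ℤ × ℤ
  kind : Fin 4

/-- First edge vectors of the four Jonsson rhombi. -/
def edgeVec1 : Fin 4 → ℤ × ℤ := ![(1, 2), (2, 1), (1, 2), (2, 1)]

/-- Second edge vectors of the four Jonsson rhombi. -/
def edgeVec2 : Fin 4 → ℤ × ℤ := ![(-1, 2), (2, -1), (2, -1), (-1, 2)]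

/-- Embedding of `ℤ²` into `ℝ²`. -/
def toR (p : ℤ × ℤ) : ℝ × ℝ := ((p.1 : ℝ), (p.2 : ℝ))

/-- The closed parallelogram covered by a placed rhombus. -/
def closedCell (r : PlacedRhombus) : Set (ℝ × ℝ) :=
  {x | ∃ s t : ℝ, 0 ≤ s ∧ s ≤ 1 ∧ 0 ≤ t ∧ t ≤ 1 ∧
    x = toR r.corner + s • toR (edgeVec1 r.kind) + t • toR (edgeVec2 r.kind)}

/-- The open parallelogram (interior) covered by a placed rhombus. -/
def openCell (r : PlacedRhombus) : Set (ℝ × ℝ) :=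
  {x | ∃ s t : ℝ, 0 < s ∧ s < 1 ∧ 0 < t ∧ t < 1 ∧
    x = toR r.corner + s • toR (edgeVec1 r.kind) + t • toR (edgeVec2 r.kind)}

/-- Translation of a placed rhombus by a lattice vector. -/
def rTranslate (w : ℤ × ℤ) (r : PlacedRhombus) : PlacedRhombus :=
  ⟨r.corner + w, r.kind⟩

/-- A rhombus tiling of the torus `ℝ²/Λ`: a `Λ`-invariant family of Jonsson rhombi with
pairwise disjoint interiors whose union is all of `ℝ²`. -/
def IsTiling (Λ : AddSubgroup (ℤ × ℤ)) (T : Set PlacedRhombus) : Prop :=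
  (∀ w ∈ Λ, ∀ r ∈ T, rTranslate w r ∈ T) ∧
  (∀ r ∈ T, ∀ r' ∈ T, r ≠ r' → openCell r ∩ openCell r' = ∅) ∧
  (⋃ r ∈ T, closedCell r) = Set.univ

/-- The number of tiles of a tiling, counted modulo `Λ`. -/
noncomputable def numTiles (Λ : AddSubgroup (ℤ × ℤ)) (T : Set PlacedRhombus) : ℕ :=
  Nat.card (Quot (fun r r' : T => ∃ w ∈ Λ, rTranslate w (r' : PlacedRhombus) = r))

/-- `t_b`: the number of rhombus tilings of the torus `ℝ²/Λ` with an even number of tiles. -/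
noncomputable def evenTilings (Λ : AddSubgroup (ℤ × ℤ)) : ℕ :=
  Nat.card {T : Set PlacedRhombus // IsTiling Λ T ∧ Even (numTiles Λ T)}

/-- `t_f`: the number of rhombus tilings of the torus `ℝ²/Λ` with an odd number of tiles. -/
noncomputable def oddTilings (Λ : AddSubgroup (ℤ × ℤ)) : ℕ :=
  Nat.card {T : Set PlacedRhombus // IsTiling Λ T ∧ Odd (numTiles Λ T)}

/-- `θ_k = 2` if `3 ∣ k`, and `θ_k = −1` otherwise. -/
def theta (k : ℤ) : ℤ := if (3 : ℤ) ∣ k then 2 else -1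

/-- There is a nonzero zero-energy ground state of the hard-core fermion model on
`G_{u,v}` which is an eigenvector of the number operator `F` with eigenvalue `k`
satisfying `k / N = ρ`, where `N = |u₁v₂ − u₂v₁|` is the number of vertices. -/
def HasGroundStateAtFilling (u v : ℤ × ℤ) (fin : Fintype ((ℤ × ℤ) ⧸ lat u v))
    (lo : LinearOrder ((ℤ × ℤ) ⧸ lat u v)) (ρ : ℚ) : Prop :=
  letI := fin
  letI := lo
  ∃ ψ : FockSpace (torusGraph u v), ψ ≠ 0 ∧
    ψ ∈ LinearMap.ker (hamiltonian (torusGraph u v)) ∧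
    ∃ k : ℕ, numberOp (torusGraph u v) ψ = (k : ℂ) • ψ ∧
      (k : ℚ) / ((u.1 * v.2 - u.2 * v.1).natAbs : ℚ) = ρ

/-! ### Abstract part: cross-cycles give ground states -/

section Abstract

variable {V : Type*} [Fintype V] [LinearOrder V] {G : SimpleGraph V}

open Classical in
/-- Extension by zero of the amplitude function to all finite sets. -/
noncomputable def amp (ψ : FockSpace G) (I : Finset V) : ℂ :=
  if h : Indep G I then ψ ⟨I, h⟩ else 0

lemma amp_eq (ψ : FockSpace G) (I : IndepSet G) : amp ψ I.1 = ψ I :=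
  dif_pos I.2

lemma supercharge_apply (ψ : FockSpace G) (J : IndepSet G) :
    supercharge G ψ J = ∑ v ∈ J.1, fsign (J.1.erase v) v * amp ψ (J.1.erase v) := by
  refine Finset.sum_congr rfl fun v _ => ?_
  exact congrArg (fun z => fsign (J.1.erase v) v * z)
    (amp_eq ψ ⟨J.1.erase v, J.2.mono (Finset.erase_subset v J.1)⟩).symm

lemma amp_supercharge (ψ : FockSpace G) (J : Finset V) (hJ : Indep G J) :
    amp (supercharge G ψ) J = ∑ v ∈ J, fsign (J.erase v) v * amp ψ (J.erase v) := by
  exact (amp_eq (supercharge G ψ) ⟨J, hJ⟩).trans (supercharge_apply ψ ⟨J, hJ⟩)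

lemma fsign_erase_not_lt (J : Finset V) {v w : V} (h : ¬ w < v) :
    fsign (J.erase w) v = fsign J v := by
  unfold fsign
  congr 2
  ext x
  simp only [Finset.mem_filter, Finset.mem_erase]
  constructor
  · rintro ⟨⟨_, h2⟩, h3⟩; exact ⟨h2, h3⟩
  · rintro ⟨h2, h3⟩; exact ⟨⟨fun e => h (e ▸ h3), h2⟩, h3⟩

lemma fsign_erase_lt (J : Finset V) {v w : V} (hw : w ∈ J) (h : w < v) :
    fsign (J.erase w) v = - fsign J v := by
  unfold fsign
  have : (J.filter (· < v)).card = ((J.erase w).filter (· < v)).card + 1 := by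
    rw [Finset.filter_erase]
    exact (Finset.card_erase_add_one (Finset.mem_filter.2 ⟨hw, h⟩)).symm
  rw [this, pow_succ]
  ring

lemma supercharge_sq (ψ : FockSpace G) : supercharge G (supercharge G ψ) = 0 := by
  refine PiLp.ext fun J => ?_
  rw [supercharge_apply]
  have key : ∀ v ∈ J.1, fsign (J.1.erase v) v * amp (supercharge G ψ) (J.1.erase v)
      = ∑ w ∈ J.1, if w = v then 0 else fsign J.1 v *
        (fsign (J.1.erase v) w * amp ψ ((J.1.erase v).erase w)) := by
    intro v hv
    rw [amp_supercharge _ _ (J.2.mono (Finset.erase_subset _ _)), Finset.mul_sum,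
      fsign_erase_not_lt _ (lt_irrefl v), ← Finset.sum_erase_add _ _ hv, if_pos rfl, add_zero]
    refine Finset.sum_congr rfl fun w hw => ?_
    rw [if_neg (Finset.ne_of_mem_erase hw), fsign_erase_not_lt _ (lt_irrefl w)]
  rw [Finset.sum_congr rfl key]
  set S := ∑ v ∈ J.1, ∑ w ∈ J.1, (if w = v then 0 else fsign J.1 v *
        (fsign (J.1.erase v) w * amp ψ ((J.1.erase v).erase w))) with hS
  have hneg : S = -S := by
    conv_lhs => rw [hS, Finset.sum_comm]
    rw [hS, ← Finset.sum_neg_distrib]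
    refine Finset.sum_congr rfl fun v hv => ?_
    rw [← Finset.sum_neg_distrib]
    refine Finset.sum_congr rfl fun w hw => ?_
    by_cases h : w = v
    · simp [h]
    · rw [if_neg h, if_neg (Ne.symm h), Finset.erase_right_comm]
      rcases lt_or_gt_of_ne h with h | h
      · rw [fsign_erase_not_lt J.1 (not_lt.2 h.le), fsign_erase_lt J.1 hw h]
        ring
      · rw [fsign_erase_lt J.1 hv h]
        rw [fsign_erase_not_lt J.1 (not_lt.2 h.le)]
        ring
  have : S = 0 := self_eq_neg.1 hneg
  simpa using this

/-- Truncation to the sector with `k` particles. -/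
noncomputable def sector (k : ℕ) (ψ : FockSpace G) : FockSpace G :=
  WithLp.toLp 2 fun I : IndepSet G => if I.1.card = k then ψ I else 0

lemma sector_apply (k : ℕ) (ψ : FockSpace G) (I : IndepSet G) :
    sector k ψ I = if I.1.card = k then ψ I else 0 := rfl

lemma amp_sector (k : ℕ) (ψ : FockSpace G) (I : Finset V) :
    amp (sector k ψ) I = if I.card = k then amp ψ I else 0 := by
  by_cases h : Indep G I
  · have e1 := (amp_eq (sector k ψ) ⟨I, h⟩).trans (sector_apply k ψ ⟨I, h⟩)
    have e2 := amp_eq ψ ⟨I, h⟩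
    refine e1.trans ?_
    rw [← e2]
  · unfold amp
    rw [dif_neg h, dif_neg h, ite_self]

/-- The basis state attached to the set `A`. -/
noncomputable def ket (G : SimpleGraph V) (A : Finset V) : FockSpace G :=
  WithLp.toLp 2 fun I : IndepSet G => if I.1 = A then 1 else 0

lemma ket_apply (A : Finset V) (I : IndepSet G) :
    ket G A I = if I.1 = A then 1 else 0 := rfl

lemma amp_ket (A I : Finset V) (h : Indep G I) :
    amp (ket G A) I = if I = A then 1 else 0 :=
  (amp_eq (ket G A) ⟨I, h⟩).trans (ket_apply A ⟨I, h⟩)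

lemma sector_supercharge (k : ℕ) (ψ : FockSpace G) :
    sector (k + 1) (supercharge G ψ) = supercharge G (sector k ψ) := by
  refine PiLp.ext fun J => ?_
  rw [sector_apply, supercharge_apply, supercharge_apply]
  split_ifs with h
  · refine Finset.sum_congr rfl fun v hv => ?_
    have hc : (J.1.erase v).card = k := by rw [Finset.card_erase_of_mem hv]; omega
    rw [amp_sector, if_pos hc]
  · symm
    refine Finset.sum_eq_zero fun v hv => ?_
    have hc : (J.1.erase v).card ≠ k := by
      have := Finset.card_erase_add_one hv
      omega
    rw [amp_sector, if_neg hc, mul_zero]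

lemma inner_sector (k : ℕ) (ψ χ : FockSpace G) :
    inner ℂ (sector k ψ) χ = inner ℂ ψ (sector k χ) := by
  rw [PiLp.inner_apply, PiLp.inner_apply]
  refine Finset.sum_congr rfl fun I _ => ?_
  rw [sector_apply, sector_apply]
  split_ifs <;> simp

lemma exists_ground (G : SimpleGraph V) (A : Finset V) (hne : A.Nonempty)
    (hdom : ∀ v, v ∉ A → ∃ a ∈ A, G.Adj a v)
    (hnr : ∀ χ : FockSpace G, supercharge G χ ≠ ket G A) :
    ∃ ψ : FockSpace G, ψ ≠ 0 ∧ ψ ∈ LinearMap.ker (hamiltonian G) ∧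
      numberOp G ψ = (A.card : ℂ) • ψ := by
  obtain ⟨k, hk⟩ : ∃ k, A.card = k + 1 := ⟨A.card - 1, by have := hne.card_pos; omega⟩
  set e : FockSpace G := ket G A with he
  have hQe : supercharge G e = 0 := by
    refine PiLp.ext fun J => ?_
    rw [supercharge_apply]
    refine Finset.sum_eq_zero fun v hv => ?_
    rw [he, amp_ket _ _ (J.2.mono (Finset.erase_subset v J.1)), if_neg, mul_zero]
    intro h
    have hvA : v ∉ A := by rw [← h]; exact Finset.notMem_erase _ _
    obtain ⟨a, ha, hav⟩ := hdom v hvA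
    exact J.2 (Finset.erase_subset v J.1 (h.symm ▸ ha)) hv hav
  obtain ⟨w, hw, ψ₀, hψ₀, hsum⟩ :=
    Submodule.exists_add_mem_mem_orthogonal (K := LinearMap.range (supercharge G)) e
  obtain ⟨χ₀, rfl⟩ := hw
  have hse : sector (k + 1) e = e := by
    refine PiLp.ext fun I => ?_
    rw [sector_apply, he, ket_apply]
    split_ifs with h1 h2 h2
    · rfl
    · rfl
    · rw [h2] at h1; exact absurd hk h1
    · rfl
  have hψ : sector (k + 1) ψ₀ = e - supercharge G (sector k χ₀) := by
    rw [← sector_supercharge]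
    refine PiLp.ext fun I => ?_
    have h1 : e I = supercharge G χ₀ I + ψ₀ I := by rw [hsum]; rfl
    have h2 : e I = sector (k + 1) e I := by rw [hse]
    rw [PiLp.sub_apply, h2, sector_apply, sector_apply, sector_apply, h1]
    split_ifs <;> simp
  refine ⟨sector (k + 1) ψ₀, ?_, ?_, ?_⟩
  · intro h
    rw [h] at hψ
    exact hnr _ (sub_eq_zero.1 hψ.symm).symm
  · have h1 : supercharge G (sector (k + 1) ψ₀) = 0 := by
      rw [hψ, map_sub, hQe, supercharge_sq, sub_zero]
    have h2 : LinearMap.adjoint (supercharge G) (sector (k + 1) ψ₀) = 0 := by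
      refine ext_inner_right ℂ fun χ => ?_
      rw [LinearMap.adjoint_inner_left, inner_sector, sector_supercharge, inner_zero_left]
      exact (Submodule.mem_orthogonal' _ _).1 hψ₀ _ ⟨_, rfl⟩
    rw [LinearMap.mem_ker, hamiltonian, LinearMap.add_apply, LinearMap.comp_apply,
      LinearMap.comp_apply, h1, h2, map_zero, map_zero, add_zero]
  · refine PiLp.ext fun I => ?_
    change (I.1.card : ℂ) * sector (k + 1) ψ₀ I = (A.card : ℂ) * sector (k + 1) ψ₀ I
    rw [sector_apply, hk]
    split_ifs with h
    · rw [h]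
    · simp

/-- The choice of `a` or its partner `b a`, according to `T`. -/
def choice (b : V → V) (T : Finset V) (a : V) : V := if a ∈ T then b a else a

lemma cross_cycle (G : SimpleGraph V) (A : Finset V) (hne : A.Nonempty) (b : V → V)
    (hdom : ∀ v, v ∉ A → ∃ a ∈ A, G.Adj a v)
    (h1 : ∀ a ∈ A, ∀ a' ∈ A, ¬ G.Adj a a')
    (h2 : ∀ a ∈ A, ∀ a' ∈ A, a ≠ a' → ¬ G.Adj (b a) a')
    (h3 : ∀ a ∈ A, ∀ a' ∈ A, ¬ G.Adj (b a) (b a'))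
    (h4 : ∀ a ∈ A, b a ∉ A)
    (h5 : ∀ a a', b a = b a' → a = a')
    (h6 : ∀ a ∈ A, ∀ a' ∈ A, a ≠ a' → (a' < a ↔ a' < b a) ∧ (b a' < a ↔ b a' < b a)) :
    ∃ ψ : FockSpace G, ψ ≠ 0 ∧ ψ ∈ LinearMap.ker (hamiltonian G) ∧
      numberOp G ψ = (A.card : ℂ) • ψ := by
  refine exists_ground G A hne hdom fun χ hχ => ?_
  have hinj : ∀ T, ∀ a ∈ A, ∀ a' ∈ A, choice b T a = choice b T a' → a = a' := by
    intro T a ha a' ha' h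
    unfold choice at h
    split_ifs at h
    · exact h5 _ _ h
    · exact absurd (h ▸ ha') (h4 a ha)
    · exact absurd (h ▸ ha) (h4 a' ha')
    · exact h
  have hind : ∀ T, Indep G (A.image (choice b T)) := by
    intro T x hx y hy
    obtain ⟨a, ha, rfl⟩ := Finset.mem_image.1 hx
    obtain ⟨a', ha', rfl⟩ := Finset.mem_image.1 hy
    by_cases hEq : a = a'
    · subst hEq; exact G.loopless.irrefl _
    unfold choice
    split_ifs
    · exact h3 a ha a' ha'
    · exact h2 a ha a' ha' hEq
    · exact fun h => h2 a' ha' a ha (Ne.symm hEq) h.symm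
    · exact h1 a ha a' ha'
  have herase : ∀ T, ∀ a ∈ A, (A.image (choice b T)).erase (choice b T a)
      = (A.erase a).image (choice b T) := by
    intro T a ha
    ext x
    simp only [Finset.mem_erase, Finset.mem_image]
    constructor
    · rintro ⟨hx, a', ha', rfl⟩
      exact ⟨a', ⟨fun h => hx (h ▸ rfl), ha'⟩, rfl⟩
    · rintro ⟨a', ⟨hn, ha'⟩, rfl⟩
      exact ⟨fun h => hn (hinj T _ ha' _ ha h), a', ha', rfl⟩
  have hzero : ∑ T ∈ A.powerset, (-1 : ℂ) ^ T.card *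
      amp (supercharge G χ) (A.image (choice b T)) = 0 := by
    have e1 : ∀ T ∈ A.powerset, (-1 : ℂ) ^ T.card *
        amp (supercharge G χ) (A.image (choice b T)) = ∑ a ∈ A, (-1 : ℂ) ^ T.card *
          (fsign ((A.erase a).image (choice b T)) (choice b T a) *
            amp χ ((A.erase a).image (choice b T))) := by
      intro T _
      rw [amp_supercharge _ _ (hind T), Finset.sum_image (fun a ha a' ha' => hinj T a ha a' ha'),
        Finset.mul_sum]
      refine Finset.sum_congr rfl fun a ha => ?_
      rw [herase T a ha]
    rw [Finset.sum_congr rfl e1, Finset.sum_comm]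
    refine Finset.sum_eq_zero fun a ha => ?_
    have hA' : A = insert a (A.erase a) := (Finset.insert_erase ha).symm
    conv_lhs => enter [1]; rw [hA']
    rw [Finset.sum_powerset_insert (Finset.notMem_erase a A), ← Finset.sum_add_distrib]
    refine Finset.sum_eq_zero fun T hT => ?_
    have haT : a ∉ T := fun h => Finset.notMem_erase a A (Finset.mem_powerset.1 hT h)
    have himg : (A.erase a).image (choice b (insert a T)) = (A.erase a).image (choice b T) := by
      refine Finset.image_congr fun x hx => ?_
      have hxa : x ≠ a := Finset.ne_of_mem_erase hx
      simp [choice, hxa]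
    have hs : fsign ((A.erase a).image (choice b T)) (choice b (insert a T) a)
        = fsign ((A.erase a).image (choice b T)) (choice b T a) := by
      unfold fsign
      congr 2
      refine Finset.filter_congr fun x hx => ?_
      obtain ⟨a', ha', rfl⟩ := Finset.mem_image.1 hx
      have hn : a ≠ a' := (Finset.ne_of_mem_erase ha').symm
      have := h6 a ha a' (Finset.mem_of_mem_erase ha') hn
      have c1 : choice b (insert a T) a = b a := by simp [choice]
      have c2 : choice b T a = a := by simp [choice, haT]
      rw [c1, c2]
      unfold choice
      split_ifs
      · exact this.2.symm
      · exact this.1.symm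
    rw [himg, hs, Finset.card_insert_of_notMem haT, pow_succ]
    ring
  rw [hχ] at hzero
  have hone : ∑ T ∈ A.powerset, (-1 : ℂ) ^ T.card *
      amp (ket G A) (A.image (choice b T)) = 1 := by
    rw [Finset.sum_eq_single ∅]
    · have : A.image (choice b ∅) = A := by
        have : choice b (∅ : Finset V) = id := by funext x; simp [choice]
        rw [this, Finset.image_id]
      rw [this, amp_ket _ _ (fun a ha b hb => h1 a ha b hb), if_pos rfl]
      simp
    · intro T hT hT0
      obtain ⟨a, haT⟩ := Finset.nonempty_iff_ne_empty.2 hT0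
      have ha := Finset.mem_powerset.1 hT haT
      rw [amp_ket _ _ (hind T), if_neg, mul_zero]
      intro h
      refine h4 a ha (h ▸ Finset.mem_image.2 ⟨a, ha, ?_⟩)
      simp [choice, haT]
    · intro h; exact absurd (Finset.empty_mem_powerset A) h
  rw [hone] at hzero
  exact one_ne_zero hzero

end Abstract

/-! ### A well-spaced subset of `ℤ/q` with cyclic gaps 4 and 5 -/

lemma step_lower {p q : ℕ} (hp : 0 < p) (h4 : 4 * p ≤ q) (i d : ℕ) :
    i * q / p + 4 * d ≤ (i + d) * q / p := by
  rw [Nat.le_div_iff_mul_le hp]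
  have := Nat.div_mul_le_self (i * q) p
  nlinarith [Nat.mul_le_mul_left d h4]

lemma step_upper {p q : ℕ} (hp : 0 < p) (h5 : q ≤ 5 * p) (i : ℕ) :
    (i + 1) * q / p ≤ i * q / p + 5 := by
  rw [← Nat.lt_add_one_iff, Nat.div_lt_iff_lt_mul hp]
  have := Nat.lt_div_mul_add (a := i * q) hp
  nlinarith

lemma exists_spaced (p q : ℕ) (hp : 0 < p) (h4 : 4 * p ≤ q) (h5 : q ≤ 5 * p) :
    ∃ S : Finset (ZMod q), S.card = p ∧
      (∀ s ∈ S, ∀ s' ∈ S, s - s' ≠ 1 ∧ s - s' ≠ 2 ∧ s - s' ≠ 3) ∧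
      (∀ r : ZMod q, ∃ s ∈ S, r - s = 0 ∨ r - s = 1 ∨ r - s = 2 ∨ r - s = -1 ∨ r - s = -2) := by
  have : NeZero q := ⟨by omega⟩
  have hper : ∀ i, (i + p) * q / p = i * q / p + q := by
    intro i
    rw [add_mul, mul_comm p q, Nat.add_mul_div_right _ _ hp]
  have hsep : ∀ i < p, ∀ j < p, ∀ d : ℤ, -3 ≤ d → d ≤ 3 →
      (((i * q / p : ℕ) : ZMod q) - ((j * q / p : ℕ) : ZMod q) = (d : ZMod q)) → i = j ∧ d = 0 := by
    intro i hi j hj d hd1 hd2 h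
    have h' : (((((i * q / p : ℕ) : ℤ) - ((j * q / p : ℕ) : ℤ) - d : ℤ)) : ZMod q) = 0 := by
      rw [Int.cast_sub, Int.cast_sub, Int.cast_natCast, Int.cast_natCast, h, sub_self]
    rw [ZMod.intCast_zmod_eq_zero_iff_dvd] at h'
    rcases lt_trichotomy i j with hij | hij | hij
    · exfalso
      have a1 := step_lower hp h4 i (j - i)
      have a2 := step_lower hp h4 j (i + p - j)
      rw [show i + (j - i) = j by omega] at a1
      rw [show j + (i + p - j) = i + p by omega, hper] at a2
      have := Int.eq_zero_of_abs_lt_dvd h' (abs_lt.2 ⟨by omega, by omega⟩)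
      omega
    · subst hij
      refine ⟨rfl, ?_⟩
      have := Int.eq_zero_of_abs_lt_dvd h' (abs_lt.2 ⟨by omega, by omega⟩)
      omega
    · exfalso
      have a1 := step_lower hp h4 j (i - j)
      have a2 := step_lower hp h4 i (j + p - i)
      rw [show j + (i - j) = i by omega] at a1
      rw [show i + (j + p - i) = j + p by omega, hper] at a2
      have := Int.eq_zero_of_abs_lt_dvd h' (abs_lt.2 ⟨by omega, by omega⟩)
      omega
  refine ⟨(Finset.range p).image fun i => ((i * q / p : ℕ) : ZMod q), ?_, ?_, ?_⟩
  · rw [Finset.card_image_of_injOn, Finset.card_range]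
    intro i hi j hj h
    have h : ((i * q / p : ℕ) : ZMod q) = ((j * q / p : ℕ) : ZMod q) := h
    exact (hsep i (by simpa using hi) j (by simpa using hj) 0 (by norm_num) (by norm_num)
      (by rw [h]; simp)).1
  · intro s hs s' hs'
    obtain ⟨i, hi, rfl⟩ := Finset.mem_image.1 hs
    obtain ⟨j, hj, rfl⟩ := Finset.mem_image.1 hs'
    rw [Finset.mem_range] at hi hj
    refine ⟨fun h => ?_, fun h => ?_, fun h => ?_⟩
    · have := (hsep i hi j hj 1 (by norm_num) (by norm_num) (by rw [h]; simp)).2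
      omega
    · have := (hsep i hi j hj 2 (by norm_num) (by norm_num) (by rw [h]; simp)).2
      omega
    · have := (hsep i hi j hj 3 (by norm_num) (by norm_num) (by rw [h]; simp)).2
      omega
  · intro r
    have hfind : ∀ n, r.val < n * q / p → ∃ i < n, i * q / p ≤ r.val ∧ r.val < (i + 1) * q / p := by
      intro n
      induction n with
      | zero => intro h; simp at h
      | succ n ih =>
        intro h
        by_cases hn : r.val < n * q / p
        · obtain ⟨i, hi, hh⟩ := ih hn
          exact ⟨i, by omega, hh⟩
        · exact ⟨n, by omega, by omega, h⟩
    obtain ⟨i, hi, hi1, hi2⟩ := hfind p (by rw [Nat.mul_div_cancel_left _ hp]; exact r.val_lt)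
    have hi3 := step_upper hp h5 i
    have hr : ((r.val : ℕ) : ZMod q) = r := ZMod.natCast_zmod_val r
    have hmem : ∀ j ≤ p, ((j * q / p : ℕ) : ZMod q) ∈
        (Finset.range p).image fun i => ((i * q / p : ℕ) : ZMod q) := by
      intro j hj
      rcases hj.lt_or_eq with hj | rfl
      · exact Finset.mem_image.2 ⟨j, Finset.mem_range.2 hj, rfl⟩
      · refine Finset.mem_image.2 ⟨0, Finset.mem_range.2 hp, ?_⟩
        simp [Nat.mul_div_cancel_left _ hp]
    by_cases hc : r.val ≤ i * q / p + 2
    · refine ⟨_, hmem i hi.le, ?_⟩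
      obtain hc | hc | hc : r.val = i * q / p ∨ r.val = i * q / p + 1 ∨ r.val = i * q / p + 2 := by
        omega
      · left; rw [← hr, hc]; simp
      · right; left; rw [← hr, hc]; push_cast; ring
      · right; right; left; rw [← hr, hc]; push_cast; ring
    · refine ⟨_, hmem (i + 1) hi, ?_⟩
      obtain hc | hc : (i + 1) * q / p = r.val + 1 ∨ (i + 1) * q / p = r.val + 2 := by
        omega
      · right; right; right; left; rw [hc, Nat.cast_add, hr]; push_cast; ring
      · right; right; right; right; rw [hc, Nat.cast_add, hr]; push_cast; ring

/-! ### The torus `ℤ²/(qℤ × qℤ)` -/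

lemma mem_lat_iff (q : ℕ) (w : ℤ × ℤ) :
    w ∈ lat ((q : ℤ), 0) (0, (q : ℤ)) ↔ (q : ℤ) ∣ w.1 ∧ (q : ℤ) ∣ w.2 := by
  unfold lat
  rw [AddSubgroup.mem_closure_pair]
  constructor
  · rintro ⟨m, n, rfl⟩
    simp
  · rintro ⟨⟨m, hm⟩, ⟨n, hn⟩⟩
    refine ⟨m, n, ?_⟩
    ext <;> simp [hm, hn, mul_comm]

/-- Reduction modulo `q` in both coordinates. -/
def redHom (q : ℕ) : ℤ × ℤ →+ ZMod q × ZMod q :=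
  AddMonoidHom.prodMap (Int.castAddHom (ZMod q)) (Int.castAddHom (ZMod q))

lemma redHom_apply (q : ℕ) (w : ℤ × ℤ) : redHom q w = ((w.1 : ZMod q), (w.2 : ZMod q)) := rfl

lemma exists_equiv (q : ℕ) :
    ∃ E : ((ℤ × ℤ) ⧸ lat ((q : ℤ), 0) (0, (q : ℤ))) ≃+ ZMod q × ZMod q,
      ∀ w : ℤ × ℤ, E (w : (ℤ × ℤ) ⧸ lat ((q : ℤ), 0) (0, (q : ℤ)))
        = ((w.1 : ZMod q), (w.2 : ZMod q)) := by
  have hker : lat ((q : ℤ), 0) (0, (q : ℤ)) = (redHom q).ker := by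
    ext w
    rw [mem_lat_iff, AddMonoidHom.mem_ker, redHom_apply, Prod.mk_eq_zero,
      ZMod.intCast_zmod_eq_zero_iff_dvd, ZMod.intCast_zmod_eq_zero_iff_dvd]
  have hsurj : Function.Surjective (redHom q) := by
    rintro ⟨x, y⟩
    obtain ⟨a, rfl⟩ := ZMod.intCast_surjective x
    obtain ⟨b, rfl⟩ := ZMod.intCast_surjective y
    exact ⟨(a, b), rfl⟩
  exact ⟨(QuotientAddGroup.quotientAddEquivOfEq hker).trans
    (QuotientAddGroup.quotientKerEquivOfSurjective (redHom q) hsurj), fun w => rfl⟩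

lemma torus_ground (p q : ℕ) (hp : 0 < p) (h4 : 4 * p ≤ q) (h5 : q ≤ 5 * p) :
    ∃ (fin : Fintype ((ℤ × ℤ) ⧸ lat ((q : ℤ), 0) (0, (q : ℤ))))
      (lo : LinearOrder ((ℤ × ℤ) ⧸ lat ((q : ℤ), 0) (0, (q : ℤ)))),
      HasGroundStateAtFilling ((q : ℤ), 0) (0, (q : ℤ)) fin lo ((p : ℚ) / q) := by
  classical
  have : NeZero q := ⟨by omega⟩
  obtain ⟨S, hScard, hsep, hcov⟩ := exists_spaced p q hp h4 h5
  obtain ⟨E, hE⟩ := exists_equiv q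
  let fin : Fintype ((ℤ × ℤ) ⧸ lat ((q : ℤ), 0) (0, (q : ℤ))) := Fintype.ofEquiv _ E.toEquiv.symm
  let f : ((ℤ × ℤ) ⧸ lat ((q : ℤ), 0) (0, (q : ℤ))) → ZMod q := fun v => 2 * (E v).1 - (E v).2
  let c : (ℤ × ℤ) ⧸ lat ((q : ℤ), 0) (0, (q : ℤ)) := ((0, 1) : ℤ × ℤ)
  let d : (ℤ × ℤ) ⧸ lat ((q : ℤ), 0) (0, (q : ℤ)) := ((1, 0) : ℤ × ℤ)
  have hEc : E c = (0, 1) := by rw [hE]; simp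
  have hEd : E d = (1, 0) := by rw [hE]; simp
  have hfc : ∀ v, f (v + c) = f v - 1 := by
    intro v; simp only [f, map_add, hEc, Prod.fst_add, Prod.snd_add]; ring
  have hfd : ∀ v, f (v + d) = f v + 2 := by
    intro v; simp only [f, map_add, hEd, Prod.fst_add, Prod.snd_add]; ring
  have hfc' : ∀ v, f (v - c) = f v + 1 := by
    intro v; have := hfc (v - c); rw [sub_add_cancel] at this; rw [this]; ring
  have hfd' : ∀ v, f (v - d) = f v - 2 := by
    intro v; have := hfd (v - d); rw [sub_add_cancel] at this; rw [this]; ring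
  have hadj : ∀ x y, (torusGraph ((q : ℤ), 0) (0, (q : ℤ))).Adj x y →
      x = y + d ∨ y = x + d ∨ x = y + c ∨ y = x + c := by
    rintro x y ⟨_, h | h | h | h⟩
    · left; rw [add_comm]; exact sub_eq_iff_eq_add.1 h
    · right; left; rw [add_comm]; exact sub_eq_iff_eq_add.1 h
    · right; right; left; rw [add_comm]; exact sub_eq_iff_eq_add.1 h
    · right; right; right; rw [add_comm]; exact sub_eq_iff_eq_add.1 h
  let A : Finset ((ℤ × ℤ) ⧸ lat ((q : ℤ), 0) (0, (q : ℤ))) :=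
    Finset.univ.filter fun v => f v ∈ S
  have hmA : ∀ v, v ∈ A ↔ f v ∈ S := fun v => by simp [A]
  have hcardA : A.card = p * q := by
    have : (S ×ˢ (Finset.univ : Finset (ZMod q))).card = A.card := by
      refine Finset.card_nbij' (fun z => E.symm (z.2, 2 * z.2 - z.1)) (fun v => (f v, (E v).1))
        ?_ ?_ ?_ ?_
      · rintro ⟨s, x⟩ h
        have hs : s ∈ S := by simpa using h
        have : f (E.symm (x, 2 * x - s)) = s := by simp [f]
        exact (hmA _).2 (by rw [this]; exact hs)
      · intro v hv
        have := (hmA v).1 hv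
        simpa using this
      · rintro ⟨s, x⟩ h
        simp [f]
      · intro v hv
        apply E.injective
        simp [f]
    rw [← this, Finset.card_product, hScard, Finset.card_univ, ZMod.card]
  obtain ⟨n, ⟨en⟩⟩ : ∃ n, Nonempty (((ℤ × ℤ) ⧸ lat ((q : ℤ), 0) (0, (q : ℤ))) ≃ Fin n) :=
    ⟨_, ⟨Fintype.equivFin _⟩⟩
  let key : ((ℤ × ℤ) ⧸ lat ((q : ℤ), 0) (0, (q : ℤ))) → ℕ := fun v =>
    if v - c ∈ A then 2 * (en (v - c)).1 + 1 else 2 * (en v).1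
  have hkey : Function.Injective key := by
    intro x y h
    simp only [key] at h
    split_ifs at h
    · exact sub_left_inj.1 (en.injective (Fin.ext (by omega : (en (x - c)).1 = (en (y - c)).1)))
    · omega
    · omega
    · exact en.injective (Fin.ext (by omega))
  let lo : LinearOrder ((ℤ × ℤ) ⧸ lat ((q : ℤ), 0) (0, (q : ℤ))) := LinearOrder.lift' key hkey
  have hlt : ∀ x y, lo.lt x y ↔ key x < key y := fun x y => Iff.rfl
  have hcA : ∀ a ∈ A, a + c ∉ A := by
    intro a ha h
    rw [hmA] at ha h
    rw [hfc] at h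
    exact (hsep _ ha _ h).1 (by ring)
  have hkA : ∀ a ∈ A, key a = 2 * (en a).1 := by
    intro a ha
    simp only [key]
    rw [if_neg]
    intro h
    exact hcA _ h (by rwa [sub_add_cancel])
  have hkB : ∀ a ∈ A, key (a + c) = 2 * (en a).1 + 1 := by
    intro a ha
    simp only [key]
    rw [add_sub_cancel_right, if_pos ha]
  have hAA : ∀ a ∈ A, ∀ a' ∈ A, ¬ (torusGraph ((q : ℤ), 0) (0, (q : ℤ))).Adj a a' := by
    intro a ha a' ha' h
    rw [hmA] at ha ha'
    rcases hadj _ _ h with rfl | rfl | rfl | rfl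
    · rw [hfd] at ha; exact (hsep _ ha _ ha').2.1 (by ring)
    · rw [hfd] at ha'; exact (hsep _ ha' _ ha).2.1 (by ring)
    · rw [hfc] at ha; exact (hsep _ ha' _ ha).1 (by ring)
    · rw [hfc] at ha'; exact (hsep _ ha _ ha').1 (by ring)
  refine ⟨fin, lo, ?_⟩
  have hne : A.Nonempty := by
    rw [← Finset.card_pos, hcardA]
    exact Nat.mul_pos hp (by omega)
  obtain ⟨ψ, hψ0, hψH, hψN⟩ := @cross_cycle _ fin lo (torusGraph ((q : ℤ), 0) (0, (q : ℤ))) A hne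
    (fun v => v + c) (by
      intro v hv
      have hmk : ∀ a, a ∈ A → (a = v + d ∨ v = a + d ∨ a = v + c ∨ v = a + c) →
          ∃ a ∈ A, (torusGraph ((q : ℤ), 0) (0, (q : ℤ))).Adj a v := by
        intro a ha h
        refine ⟨a, ha, fun e => hv (e ▸ ha), ?_⟩
        rcases h with h | h | h | h
        · left; rw [h, add_sub_cancel_left]
        · right; left; rw [h, add_sub_cancel_left]
        · right; right; left; rw [h, add_sub_cancel_left]
        · right; right; right; rw [h, add_sub_cancel_left]
      obtain ⟨s, hs, h | h | h | h | h⟩ := hcov (f v)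
      · exact absurd ((hmA v).2 (by rwa [sub_eq_zero.1 h])) hv
      · refine hmk (v + c) ((hmA _).2 ?_) (Or.inr (Or.inr (Or.inl rfl)))
        rw [hfc, ← h, sub_sub_cancel]; exact hs
      · refine hmk (v - d) ((hmA _).2 ?_) (Or.inr (Or.inl (sub_add_cancel _ _).symm))
        rw [hfd', ← h, sub_sub_cancel]; exact hs
      · refine hmk (v - c) ((hmA _).2 ?_) (Or.inr (Or.inr (Or.inr (sub_add_cancel _ _).symm)))
        rw [hfc', show f v + 1 = s by linear_combination h]; exact hs
      · refine hmk (v + d) ((hmA _).2 ?_) (Or.inl rfl)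
        rw [hfd, show f v + 2 = s by linear_combination h]; exact hs)
    hAA (by
      intro a ha a' ha' hn h
      rw [hmA] at ha ha'
      rcases hadj _ _ h with h | h | h | h
      · have e := congrArg f h
        rw [hfc, hfd] at e
        exact (hsep _ ha _ ha').2.2 (by linear_combination e)
      · have e := congrArg f h
        rw [hfd, hfc] at e
        exact (hsep _ ha' _ ha).1 (by linear_combination e)
      · exact hn (add_right_cancel h)
      · have e := congrArg f h
        rw [hfc, hfc] at e
        exact (hsep _ ha _ ha').2.1 (by linear_combination -e))
    (by
      intro a ha a' ha' h
      refine hAA a ha a' ha' ⟨fun e => h.1 (by rw [e]), ?_⟩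
      have h2 := h.2
      simp only [add_sub_add_right_eq_sub] at h2
      exact h2)
    hcA (fun a a' h => add_right_cancel h) (by
      intro a ha a' ha' hn
      have hen : (en a).1 ≠ (en a').1 := fun h => hn (en.injective (Fin.ext h))
      have k1 := hkA a ha
      have k2 := hkB a ha
      have k3 := hkA a' ha'
      have k4 := hkB a' ha'
      constructor
      · refine (hlt _ _).trans (Iff.trans ?_ (hlt _ _).symm)
        rw [k1, k2, k3]; omega
      · refine (hlt _ _).trans (Iff.trans ?_ (hlt _ _).symm)
        rw [k1, k2, k4]; omega)
  refine ⟨ψ, hψ0, hψH, A.card, hψN, ?_⟩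
  rw [hcardA]
  have hq : (q : ℚ) ≠ 0 := by exact_mod_cast NeZero.ne q
  have : ((q : ℤ) * (q : ℤ) - 0 * 0).natAbs = q * q := by simp [Int.natAbs_mul]
  simp only [this]
  push_cast
  field_simp

/-- Zero-energy ground states of the torus square-lattice model exist at
every rational filling `ρ` with `1/5 ≤ ρ ≤ 1/4`. -/
theorem ground_states_at_all_fillings (ρ : ℚ) (h₁ : 1 / 5 ≤ ρ) (h₂ : ρ ≤ 1 / 4) :
    ∃ u v : ℤ × ℤ, u.1 * v.2 - u.2 * v.1 ≠ 0 ∧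
      (∀ w ∈ lat u v, w ≠ 0 → 9 ≤ w.1 ^ 2 + w.2 ^ 2) ∧
      ∃ (fin : Fintype ((ℤ × ℤ) ⧸ lat u v)) (lo : LinearOrder ((ℤ × ℤ) ⧸ lat u v)),
        HasGroundStateAtFilling u v fin lo ρ := by
  have hden : (0 : ℚ) < ρ.den := by exact_mod_cast ρ.den_pos
  have hnum : 0 < ρ.num := Rat.num_pos.2 (lt_of_lt_of_le (by norm_num) h₁)
  obtain ⟨p, hp⟩ : ∃ p : ℕ, ρ.num = p := ⟨ρ.num.toNat, by omega⟩
  have hρ : ρ = (p : ℚ) / ρ.den := by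
    conv_lhs => rw [← Rat.num_div_den ρ, hp]
    simp
  have h4 : 4 * p ≤ ρ.den := by
    rw [hρ, div_le_div_iff₀ hden (by norm_num)] at h₂
    have : ((4 * p : ℕ) : ℚ) ≤ ((ρ.den : ℕ) : ℚ) := by push_cast; linarith
    exact_mod_cast this
  have h5 : ρ.den ≤ 5 * p := by
    rw [hρ, div_le_div_iff₀ (by norm_num) hden] at h₁
    have : ((ρ.den : ℕ) : ℚ) ≤ ((5 * p : ℕ) : ℚ) := by push_cast; linarith
    exact_mod_cast this
  have hp0 : 0 < p := by omega
  generalize ρ.den = q at *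
  refine ⟨((q : ℤ), 0), (0, (q : ℤ)), ?_, ?_, ?_⟩
  · have : (q : ℤ) ≠ 0 := by omega
    simpa using this
  · intro w hw hw0
    rw [mem_lat_iff] at hw
    obtain ⟨⟨m, hm⟩, ⟨n, hn⟩⟩ := hw
    have hq4 : (4 : ℤ) ≤ q := by omega
    have hsq : ∀ t : ℤ, t ≠ 0 → 9 ≤ ((q : ℤ) * t) ^ 2 := by
      intro t ht
      have : 1 ≤ t ^ 2 := by have := sq_pos_of_ne_zero ht; omega
      rw [mul_pow]
      have h16 : (16 : ℤ) ≤ (q : ℤ) ^ 2 := by nlinarith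
      nlinarith
    by_cases hm0 : m = 0
    · have hn0 : n ≠ 0 := by
        rintro rfl
        exact hw0 (Prod.ext (by simp [hm, hm0]) (by simp [hn]))
      have := hsq n hn0
      rw [hn]; nlinarith [sq_nonneg w.1]
    · have := hsq m hm0
      rw [hm]; nlinarith [sq_nonneg w.2]
  · rw [hρ]
    exact torus_ground p q hp0 h4 h5
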